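/- Let N ≥ 1 and k ≥ 1. For all integers m, n with 0 ≤ n ≤ m ≤ k, one has M^k_m = C^k_{m-n} M^k_n C^{k+1}_{(k+1)-(m-n)}, where for m = n the right cycling factor C^{k+1}_{k+1} = C_{N^{k+1},1} is the identity. -/

import Mathlib

open Matrix BigOperators Filter Topology

noncomputable section

/-- Cast a `Fin`-indexed matrix along equalities of the dimensions. -/
def castM {a b a' b' : ℕ} (ha : a = a') (hb : b = b') (A : Matrix (Fin a) (Fin b) ℝ) :
    Matrix (Fin a') (Fin b') ℝ :=
  Matrix.reindex (finCongr ha) (finCongr hb) A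

/-- Kronecker product (row-major convention) of `Fin`-indexed real matrices. -/
def kron {a b c d : ℕ} (A : Matrix (Fin a) (Fin b) ℝ) (B : Matrix (Fin c) (Fin d) ℝ) :
    Matrix (Fin (a * c)) (Fin (b * d)) ℝ :=
  Matrix.of fun i j => A i.divNat j.divNat * B i.modNat j.modNat

/-- Standard basis column vector `e_{n,i}` (as an `n × 1` matrix). -/
def eCol (n : ℕ) (i : Fin n) : Matrix (Fin n) (Fin 1) ℝ :=
  Matrix.of fun r _ => if r = i then (1 : ℝ) else 0

/-- Standard basis row vector `e_{n,i}ᵀ` (as a `1 × n` matrix). -/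
def eRow (n : ℕ) (i : Fin n) : Matrix (Fin 1) (Fin n) ℝ :=
  Matrix.of fun _ c => if c = i then (1 : ℝ) else 0

/-- `E_{n,i} = e_{n,i} e_{n,i}ᵀ`. -/
def EE (n : ℕ) (i : Fin n) : Matrix (Fin n) (Fin n) ℝ :=
  Matrix.of fun r c => if r = i ∧ c = i then (1 : ℝ) else 0

/-- All-ones row vector `1_nᵀ` (as a `1 × n` matrix). -/
def onesRow (n : ℕ) : Matrix (Fin 1) (Fin n) ℝ := Matrix.of fun _ _ => (1 : ℝ)

/-- A column vector (an `n × 1` matrix) is a simplex vector: nonnegative entries summing to 1. -/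
def IsSimplex {n : ℕ} (v : Matrix (Fin n) (Fin 1) ℝ) : Prop :=
  (∀ i, 0 ≤ v i 0) ∧ ∑ i, v i 0 = 1

/-- A matrix is column-stochastic: each column is a simplex vector. -/
def IsColStochastic {a b : ℕ} (A : Matrix (Fin a) (Fin b) ℝ) : Prop :=
  ∀ j, (∀ i, 0 ≤ A i j) ∧ ∑ i, A i j = 1

/-- The (0-based) index `b * i + j` corresponding to the 1-based index `b(i-1)+j`. -/
def pairIdx {a b : ℕ} (i : Fin a) (j : Fin b) : Fin (a * b) :=
  ⟨b * i.val + j.val, by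
    have h : b * (i.val + 1) ≤ b * a := Nat.mul_le_mul le_rfl i.isLt
    have h2 : b * (i.val + 1) = b * i.val + b := by ring
    have h3 : b * a = a * b := Nat.mul_comm b a
    have h4 : j.val < b := j.isLt
    omega⟩

/-- Commutation matrix `C_{n,m} = ∑_i e_{m,i}ᵀ ⊗ E_n ⊗ e_{m,i}`. -/
def commMat (n m : ℕ) : Matrix (Fin (n * m)) (Fin (n * m)) ℝ :=
  ∑ i : Fin m,
    castM (by ring) (by ring)
      (kron (kron (eRow m i) (1 : Matrix (Fin n) (Fin n) ℝ)) (eCol m i))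

/-- Marginalization matrix `M^k_m = E_{N^m} ⊗ 1_Nᵀ ⊗ E_{N^{k-m}}`. -/
def Marg (N k m : ℕ) (hm : m ≤ k) : Matrix (Fin (N ^ k)) (Fin (N ^ (k + 1))) ℝ :=
  castM (by rw [mul_one, ← pow_add]; exact congrArg (N ^ ·) (by omega))
    (by rw [← pow_succ, ← pow_add]; exact congrArg (N ^ ·) (by omega))
    (kron (kron (1 : Matrix (Fin (N ^ m)) (Fin (N ^ m)) ℝ) (onesRow N))
      (1 : Matrix (Fin (N ^ (k - m))) (Fin (N ^ (k - m))) ℝ))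

/-- Branching matrix `B^k_m(𝒬) = ∑_{i,j} E_{N^m,i} ⊗ q_{N^{k-m}(i-1)+j} ⊗ E_{N^{k-m},j}`. -/
def Branch (N k m : ℕ) (hm : m ≤ k) (q : Fin (N ^ k) → Matrix (Fin N) (Fin 1) ℝ) :
    Matrix (Fin (N ^ (k + 1))) (Fin (N ^ k)) ℝ :=
  castM (by rw [← pow_succ, ← pow_add]; exact congrArg (N ^ ·) (by omega))
    (by rw [mul_one, ← pow_add]; exact congrArg (N ^ ·) (by omega))
    (∑ i : Fin (N ^ m), ∑ j : Fin (N ^ (k - m)),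
      kron (kron (EE (N ^ m) i)
          (q (finCongr (by rw [← pow_add]; exact congrArg (N ^ ·) (by omega)) (pairIdx i j))))
        (EE (N ^ (k - m)) j))

/-- Cycling matrix `C^k_m = C_{N^m, N^{k-m}}`. -/
def Cyc (N k m : ℕ) (hm : m ≤ k) : Matrix (Fin (N ^ k)) (Fin (N ^ k)) ℝ :=
  castM (by rw [← pow_add]; exact congrArg (N ^ ·) (by omega))
    (by rw [← pow_add]; exact congrArg (N ^ ·) (by omega))
    (commMat (N ^ m) (N ^ (k - m)))

/-- The block `Q_i` of a tuple `𝒬`: the `N × N` matrix with columns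
`q_{N(i-1)+1}, …, q_{N(i-1)+N}`. -/
def Qblk (N k : ℕ) (hk : 1 ≤ k) (q : Fin (N ^ k) → Matrix (Fin N) (Fin 1) ℝ)
    (i : Fin (N ^ (k - 1))) : Matrix (Fin N) (Fin N) ℝ :=
  Matrix.of fun r c =>
    q (finCongr (by rw [← pow_succ]; exact congrArg (N ^ ·) (by omega)) (pairIdx i c)) r 0

/-- The k-th order transition matrix `Q^(k) = C_{N,N^{k-1}} ∑_i E_{N^{k-1},i} ⊗ Q_i`. -/
def TransMat (N k : ℕ) (hk : 1 ≤ k) (q : Fin (N ^ k) → Matrix (Fin N) (Fin 1) ℝ) :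
    Matrix (Fin (N ^ k)) (Fin (N ^ k)) ℝ :=
  castM (by rw [← pow_succ']; exact congrArg (N ^ ·) (by omega))
      (by rw [← pow_succ']; exact congrArg (N ^ ·) (by omega)) (commMat N (N ^ (k - 1))) *
    ∑ i : Fin (N ^ (k - 1)),
      castM (by rw [← pow_succ]; exact congrArg (N ^ ·) (by omega))
        (by rw [← pow_succ]; exact congrArg (N ^ ·) (by omega))
        (kron (EE (N ^ (k - 1)) i) (Qblk N k hk q i))

/-- `MChain N m n = M^m_m M^{m+1}_{m+1} ⋯ M^{m+n}_{m+n}`. -/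
def MChain (N m : ℕ) : (n : ℕ) → Matrix (Fin (N ^ m)) (Fin (N ^ (m + n + 1))) ℝ
  | 0 => Marg N m m le_rfl
  | n + 1 => MChain N m n * Marg N (m + n + 1) (m + n + 1) le_rfl

/-- `BChain N Q m n = B^{m+n}_{m+n}(𝒬^{(m+n)}) ⋯ B^m_m(𝒬^{(m)})`. -/
def BChain (N : ℕ) (Q : (j : ℕ) → Fin (N ^ j) → Matrix (Fin N) (Fin 1) ℝ) (m : ℕ) :
    (n : ℕ) → Matrix (Fin (N ^ (m + n + 1))) (Fin (N ^ m)) ℝ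
  | 0 => Branch N m m le_rfl (Q m)
  | n + 1 => Branch N (m + n + 1) (m + n + 1) le_rfl (Q (m + n + 1)) * BChain N Q m n

/-- The k‑shift matrix `S(𝒬^(m), …, 𝒬^(k))` with `k = m + n`:
`M^m_m ⋯ M^k_k C^{k+1}_1 B^k_k(𝒬^(k)) ⋯ B^m_m(𝒬^(m))`. -/
def Shift (N m n : ℕ) (Q : (j : ℕ) → Fin (N ^ j) → Matrix (Fin N) (Fin 1) ℝ) :
    Matrix (Fin (N ^ m)) (Fin (N ^ m)) ℝ :=
  MChain N m n * Cyc N (m + n + 1) 1 (by omega) * BChain N Q m n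

/-- ℓ¹ norm of a column vector. -/
def l1 {n : ℕ} (v : Matrix (Fin n) (Fin 1) ℝ) : ℝ := ∑ i, |v i 0|

/-- Matrix of a function on indices. -/
def fnMat (a b : ℕ) (f : ℕ → ℕ) : Matrix (Fin a) (Fin b) ℝ :=
  Matrix.of fun i j => if i.val = f j.val then (1 : ℝ) else 0

theorem fnMat_mul (a b c : ℕ) (f g : ℕ → ℕ) (hg : ∀ j < c, g j < b) :
    fnMat a b f * fnMat b c g = fnMat a c (fun x => f (g x)) := by
  ext i j
  rw [Matrix.mul_apply]
  rw [Finset.sum_eq_single (⟨g j.val, hg _ j.isLt⟩ : Fin b)]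
  · simp [fnMat]
  · intro x _ hx
    have : x.val ≠ g j.val := fun h => hx (Fin.ext h)
    simp [fnMat, this]
  · simp

theorem commMat_eq (n m : ℕ) :
    commMat n m = fnMat (n * m) (n * m) (fun c => m * (c % n) + c / n) := by
  ext r c
  have hm : 0 < m := Nat.pos_of_ne_zero (by rintro rfl; exact absurd r.isLt (by simp))
  have hn : 0 < n := Nat.pos_of_ne_zero (by rintro rfl; exact absurd r.isLt (by simp))
  have hc : c.val / n < m := Nat.div_lt_of_lt_mul c.isLt
  have hr : r.val / m < n := Nat.div_lt_of_lt_mul (lt_of_lt_of_eq r.isLt (mul_comm n m))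
  unfold commMat
  rw [Matrix.sum_apply]
  rw [Finset.sum_eq_single (⟨c.val / n, hc⟩ : Fin m)]
  · have key : (r.val = m * (c.val % n) + c.val / n) ↔
        (r.val / m = c.val % n ∧ r.val % m = c.val / n) := by
      constructor
      · intro h
        rw [h, Nat.mul_add_div hm, Nat.mul_add_mod, Nat.div_eq_of_lt hc, Nat.mod_eq_of_lt hc]
        simp
      · rintro ⟨h1, h2⟩
        rw [← h1, ← h2, Nat.div_add_mod]
    simp only [castM, kron, eRow, eCol, fnMat, Matrix.reindex_apply, Matrix.submatrix_apply,
      Matrix.of_apply, Matrix.one_apply, Fin.ext_iff, Fin.coe_divNat, Fin.coe_modNat,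
      finCongr_symm, finCongr_apply, Fin.val_cast, key, Nat.div_one, Nat.mod_eq_of_lt hr]
    by_cases h1 : r.val / m = c.val % n <;> by_cases h2 : r.val % m = c.val / n <;>
      simp [h1, h2]
  · intro b _ hb
    have : c.val / n ≠ b.val := fun h => hb (Fin.ext h.symm)
    simp [castM, kron, eRow, Fin.ext_iff, this]
  · simp

theorem castM_fnMat {a b a' b' : ℕ} (ha : a = a') (hb : b = b') (f : ℕ → ℕ) :
    castM ha hb (fnMat a b f) = fnMat a' b' f := by
  subst ha hb; rfl

theorem Cyc_eq (N k m : ℕ) (hm : m ≤ k) :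
    Cyc N k m hm = fnMat (N ^ k) (N ^ k)
      (fun c => N ^ (k - m) * (c % N ^ m) + c / N ^ m) := by
  unfold Cyc
  rw [commMat_eq, castM_fnMat]

theorem Marg_eq (N k m : ℕ) (hN : 1 ≤ N) (hm : m ≤ k) :
    Marg N k m hm = fnMat (N ^ k) (N ^ (k + 1))
      (fun c => N ^ (k - m) * (c / N ^ (k - m) / N) + c % N ^ (k - m)) := by
  unfold Marg
  rw [← castM_fnMat (a := N ^ m * 1 * N ^ (k - m)) (b := N ^ m * N * N ^ (k - m))
    (by rw [mul_one, ← pow_add]; exact congrArg (N ^ ·) (by omega))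
    (by rw [← pow_succ, ← pow_add]; exact congrArg (N ^ ·) (by omega))]
  congr 1
  ext r c
  have hs : 0 < N ^ (k - m) := Nat.pow_pos hN
  generalize N ^ (k - m) = s at *
  have hz : c.val % s < s := Nat.mod_lt _ hs
  have key : (r.val = s * (c.val / s / N) + c.val % s) ↔
      (r.val / s = c.val / s / N ∧ r.val % s = c.val % s) := by
    constructor
    · intro h
      rw [h, Nat.mul_add_div hs, Nat.mul_add_mod, Nat.div_eq_of_lt hz, Nat.mod_mod]
      simp
    · rintro ⟨h1, h2⟩
      rw [← h1, ← h2, Nat.div_add_mod]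
  simp only [kron, onesRow, fnMat, Matrix.of_apply, Matrix.one_apply, Fin.ext_iff,
    Fin.coe_divNat, Fin.coe_modNat, key, Nat.div_one]
  by_cases h1 : r.val / s = c.val / s / N <;> by_cases h2 : r.val % s = c.val % s <;>
    simp [h1, h2]

theorem Cyc_lt (N k m : ℕ) (hN : 1 ≤ N) (hm : m ≤ k) (c : ℕ) (hc : c < N ^ k) :
    N ^ (k - m) * (c % N ^ m) + c / N ^ m < N ^ k := by
  have h : N ^ k = N ^ m * N ^ (k - m) := by
    rw [← pow_add]; exact congrArg (N ^ ·) (by omega)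
  have h0 : 0 < N ^ m := Nat.pow_pos hN
  rw [h] at hc ⊢
  have h1 : c / N ^ m < N ^ (k - m) := Nat.div_lt_of_lt_mul hc
  have h2 : c % N ^ m + 1 ≤ N ^ m := Nat.mod_lt _ h0
  nlinarith [Nat.mul_le_mul_left (N ^ (k - m)) h2]

theorem Marg_lt (N k m : ℕ) (hN : 1 ≤ N) (hm : m ≤ k) (c : ℕ) (hc : c < N ^ (k + 1)) :
    N ^ (k - m) * (c / N ^ (k - m) / N) + c % N ^ (k - m) < N ^ k := by
  have h : N ^ k = N ^ (k - m) * N ^ m := by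
    rw [← pow_add]; exact congrArg (N ^ ·) (by omega)
  have h0 : 0 < N ^ (k - m) := Nat.pow_pos hN
  rw [pow_succ, h] at hc
  simp only [h]
  have h1 : c / N ^ (k - m) / N < N ^ m := by
    rw [Nat.div_div_eq_div_mul]
    apply Nat.div_lt_of_lt_mul
    calc c < _ := hc
      _ = _ := by ring
  have h2 : c % N ^ (k - m) < N ^ (k - m) := Nat.mod_lt _ h0
  nlinarith [Nat.mul_le_mul_left (N ^ (k - m)) (Nat.succ_le_of_lt h1)]

theorem arith (N p q s c : ℕ) (hN : 0 < N) (hp : 0 < p) (hq : 0 < q) (hs : 0 < s)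
    (hc : c < p * (q * N * s)) (u v w : ℕ) (hu : u = q * N * s) (hv : v = s * p)
    (hw : w = q * s) :
    s * (c / s / N) + c % s =
      w * ((v * ((p * (c % u) + c / u) / v / N) + (p * (c % u) + c / u) % v) % p) +
        (v * ((p * (c % u) + c / u) / v / N) + (p * (c % u) + c / u) % v) / p := by
  subst hu hv hw
  obtain ⟨x, a, b, z, hx, hb, hz, ha, rfl⟩ : ∃ x a b z, x < p ∧ b < N ∧ z < s ∧ a < q ∧
      c = s * (N * (q * x + a) + b) + z := by
    refine ⟨c / s / N / q, c / s / N % q, c / s % N, c % s, ?_, Nat.mod_lt _ hN,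
      Nat.mod_lt _ hs, Nat.mod_lt _ hq, ?_⟩
    · rw [Nat.div_div_eq_div_mul, Nat.div_div_eq_div_mul]
      apply Nat.div_lt_of_lt_mul
      calc c < _ := hc
        _ = _ := by ring
    · rw [Nat.div_add_mod, Nat.div_add_mod, Nat.div_add_mod]
  have hy : s * (N * a + b) + z < q * N * s := by
    have h1 : N * a + b + 1 ≤ N * q := by nlinarith [Nat.mul_le_mul_left N ha]
    nlinarith [Nat.mul_le_mul_left s h1]
  have e1 : s * (N * (q * x + a) + b) + z = q * N * s * x + (s * (N * a + b) + z) := by ring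
  have hzx : p * z + x < s * p := by nlinarith [Nat.mul_le_mul_left p hz]
  have d1 : (s * (N * (q * x + a) + b) + z) / s / N = q * x + a := by
    rw [Nat.mul_add_div hs, Nat.div_eq_of_lt hz, add_zero, Nat.mul_add_div hN,
      Nat.div_eq_of_lt hb, add_zero]
  have d2 : (s * (N * (q * x + a) + b) + z) % s = z := by
    rw [Nat.mul_add_mod, Nat.mod_eq_of_lt hz]
  have d3 : (s * (N * (q * x + a) + b) + z) % (q * N * s) = s * (N * a + b) + z := by
    rw [e1, Nat.mul_add_mod, Nat.mod_eq_of_lt hy]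
  have d4 : (s * (N * (q * x + a) + b) + z) / (q * N * s) = x := by
    rw [e1, Nat.mul_add_div (by positivity), Nat.div_eq_of_lt hy, add_zero]
  rw [d1, d2, d3, d4]
  have e2 : p * (s * (N * a + b) + z) + x = s * p * (N * a + b) + (p * z + x) := by ring
  rw [e2, Nat.mul_add_mod, Nat.mod_eq_of_lt hzx, Nat.mul_add_div (by positivity),
    Nat.div_eq_of_lt hzx, add_zero, Nat.mul_add_div hN, Nat.div_eq_of_lt hb, add_zero]
  have e3 : s * p * a + (p * z + x) = p * (s * a + z) + x := by ring
  rw [e3, Nat.mul_add_mod, Nat.mod_eq_of_lt hx, Nat.mul_add_div hp, Nat.div_eq_of_lt hx]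
  ring

/-- `M^k_m = C^k_{m-n} M^k_n C^{k+1}_{(k+1)-(m-n)}` for `0 ≤ n ≤ m ≤ k`. -/
theorem stmt4 (N k : ℕ) (hN : 1 ≤ N) (hk : 1 ≤ k) (m n : ℕ) (hn : n ≤ m) (hm : m ≤ k) :
    Marg N k m hm =
      Cyc N k (m - n) (by omega) * Marg N k n (by omega) *
        Cyc N (k + 1) ((k + 1) - (m - n)) (by omega) := by
  rw [Marg_eq N k m hN, Marg_eq N k n hN, Cyc_eq, Cyc_eq,
    fnMat_mul _ _ _ _ _ (fun j hj => Marg_lt N k n hN (by omega) j hj),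
    fnMat_mul _ _ _ _ _ (fun j hj => Cyc_lt N (k + 1) _ hN (by omega) j hj)]
  ext i j
  have hpow : ∀ t, 0 < N ^ t := fun t => Nat.pow_pos hN
  have hd : k + 1 - (k + 1 - (m - n)) = m - n := by omega
  have hu : N ^ (k + 1 - (m - n)) = N ^ n * N * N ^ (k - m) := by
    rw [← pow_succ, ← pow_add]; exact congrArg (N ^ ·) (by omega)
  have h := arith N (N ^ (m - n)) (N ^ n) (N ^ (k - m)) j.val hN (hpow _) (hpow _) (hpow _)
    (by
      rw [← hu, ← pow_add]
      exact lt_of_lt_of_eq j.isLt (congrArg (N ^ ·) (by omega)))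
    (N ^ (k + 1 - (m - n))) (N ^ (k - n)) (N ^ (k - (m - n))) hu
    (by rw [← pow_add]; exact congrArg (N ^ ·) (by omega))
    (by rw [← pow_add]; exact congrArg (N ^ ·) (by omega))
  simp only [fnMat, Matrix.of_apply, hd]
  simp only [h]
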